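/- (Biorthogonal analogue of Favard's theorem.) Let R be a division ring, let {p_n} be left polynomials and {q_n} be right polynomials over R such that p_n and q_n each have degree exactly n (their n-th coefficients are nonzero and all higher coefficients vanish), and let c : ℕ → R be any sequence. Then there exists a unique family of bimoments I : ℕ → ℕ → R such that for all n, m ∈ ℕ: ⟨p_n, q_m⟩ = 0 when n ≠ m, and ⟨p_n, q_n⟩ = c_n. Explicitly: there is a unique I : ℕ → ℕ → R with ∑_{i=0}^{n} ∑_{j=0}^{m} a_n(i) · I i j · b_m(j) = (if n = m then c_n else 0), where a_n, b_m are the coefficient sequences of p_n, q_m. -/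

import Mathlib

/-!
In terms of the lower triangular coefficient matrices `A n i = (p n).coeff i` and
`B m j = (q m).coeff j`, the biorthogonality conditions read `A I Bᵀ = diag c`. Both matrices have
nonzero diagonal, so triangular systems in them are uniquely solvable by forward substitution
(`forall_sum_smul_eq_iff`). Solving `A J = diag c` and then `I Bᵀ = J` determines `I`.
As `B` multiplies from the right, the second system is a left system over `Rᵐᵒᵖ`.
-/

/-- The pairing of a left polynomial `p(x) = ∑ aᵢ xⁱ` with a right polynomial
`q(y) = ∑ yʲ bⱼ` relative to bimoments `I`: `⟨p, q⟩ = ∑_{i,j} aᵢ · I i j · bⱼ`. -/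
noncomputable def bimomentPairing {R : Type*} [DivisionRing R] (I : ℕ → ℕ → R)
    (p q : Polynomial R) : R :=
  ∑ i ∈ p.support, ∑ j ∈ q.support, p.coeff i * I i j * q.coeff j

/-- Forward substitution: the solution `x` of the lower triangular system
`∑ i ≤ n, a n i • x i = d n` with coefficients acting on a module `M`, provided every diagonal
entry `a n n` is nonzero. -/
noncomputable def forwardSubst {K M : Type*} [DivisionRing K] [AddCommGroup M] [Module K M]
    (a : ℕ → ℕ → K) (d : ℕ → M) (n : ℕ) : M :=
  (a n n)⁻¹ • (d n - ∑ i : Fin n, a n i • forwardSubst a d i)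
termination_by n
decreasing_by exact i.2

theorem forall_sum_smul_eq_iff {K M : Type*} [DivisionRing K] [AddCommGroup M] [Module K M]
    (a : ℕ → ℕ → K) (ha : ∀ n, a n n ≠ 0) (d x : ℕ → M) :
    (∀ n, ∑ i ∈ Finset.range (n + 1), a n i • x i = d n) ↔ x = forwardSubst a d := by
  constructor
  · intro h
    funext n
    induction n using Nat.strong_induction_on with
    | _ n ih =>
      rw [forwardSubst, Finset.sum_congr rfl fun (i : Fin n) _ => by rw [← ih i i.2],
        Fin.sum_univ_eq_sum_range (fun i => a n i • x i) n, ← h n, Finset.sum_range_succ,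
        add_sub_cancel_left, inv_smul_smul₀ (ha n)]
  · rintro rfl n
    rw [Finset.sum_range_succ]
    conv_lhs => rw [forwardSubst.eq_1 a d n]
    rw [smul_inv_smul₀ (ha n), Fin.sum_univ_eq_sum_range (fun i => a n i • forwardSubst a d i) n,
      add_sub_cancel]

theorem bimomentPairing_eq_sum_range {R : Type*} [DivisionRing R] (I : ℕ → ℕ → R)
    (p q : Polynomial R) (n m : ℕ) (hp : ∀ i, n < i → p.coeff i = 0)
    (hq : ∀ j, m < j → q.coeff j = 0) :
    bimomentPairing I p q =
      ∑ i ∈ Finset.range (n + 1), p.coeff i *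
        ∑ j ∈ Finset.range (m + 1), I i j * q.coeff j := by
  have support_subset : ∀ (r : Polynomial R) (k : ℕ), (∀ i, k < i → r.coeff i = 0) →
      r.support ⊆ Finset.range (k + 1) := by
    intro r k hr i hi
    rw [Polynomial.mem_support_iff] at hi
    rw [Finset.mem_range]
    by_contra hlt
    exact hi (hr i (by omega))
  unfold bimomentPairing
  rw [Finset.sum_subset (support_subset p n hp)
    (fun i _ hi => by simp [Polynomial.notMem_support_iff.mp hi])]
  refine Finset.sum_congr rfl fun i _ => ?_
  rw [Finset.sum_subset (support_subset q m hq)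
    (fun j _ hj => by simp [Polynomial.notMem_support_iff.mp hj]), Finset.mul_sum]
  exact Finset.sum_congr rfl fun j _ => mul_assoc _ _ _


/-- biorthogonal analogue of Favard's theorem: for any sequences `{p n}` of
left polynomials and `{q n}` of right polynomials over a division ring with `p n` and `q n`
of degree exactly `n`, and any sequence `c : ℕ → R`, there is a unique family of bimoments
`I : ℕ → ℕ → R` making `{p n}, {q n}` biorthogonal with `⟨p n, q n⟩ = c n`:
`⟨p n, q m⟩ = (if n = m then c n else 0)` for all `n m`. -/
theorem favard_biorthogonal {R : Type*} [DivisionRing R]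
    (p q : ℕ → Polynomial R)
    (hp : ∀ n, (p n).coeff n ≠ 0 ∧ ∀ i, n < i → (p n).coeff i = 0)
    (hq : ∀ n, (q n).coeff n ≠ 0 ∧ ∀ j, n < j → (q n).coeff j = 0)
    (c : ℕ → R) :
    ∃! I : ℕ → ℕ → R, ∀ n m : ℕ,
      bimomentPairing I (p n) (q m) = if n = m then c n else 0 := by
  have left := forall_sum_smul_eq_iff (M := ℕ → R) (fun n i => (p n).coeff i)
    (fun n => (hp n).1) (fun n m => if n = m then c n else 0)
  have right := forall_sum_smul_eq_iff (K := Rᵐᵒᵖ) (M := ℕ → R)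
    (fun m j => MulOpposite.op ((q m).coeff j))
    (fun m => by simpa using (hq m).1)
  set J : ℕ → ℕ → R := forwardSubst (fun n i => (p n).coeff i)
    (fun n m => if n = m then c n else 0) with hJ
  -- The right system is solved for the columns `fun j i => I i j`, with right-hand sides the
  -- columns of `J`.
  have key : ∀ I : ℕ → ℕ → R,
      (∀ n m, bimomentPairing I (p n) (q m) = if n = m then c n else 0) ↔
        (fun j i => I i j) = forwardSubst (fun m j => MulOpposite.op ((q m).coeff j))
          (fun m i => J i m) := by
    intro I
    rw [← right]
    have h := left fun i m => ∑ j ∈ Finset.range (m + 1), I i j * (q m).coeff j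
    simp only [funext_iff, Finset.sum_apply, Pi.smul_apply, smul_eq_mul,
      MulOpposite.smul_eq_mul_unop, MulOpposite.unop_op] at h ⊢
    simp only [fun n m => bimomentPairing_eq_sum_range I (p n) (q m) n m (hp n).2 (hq m).2]
    rw [h, forall_comm]
  refine ⟨fun i j => forwardSubst (fun m j => MulOpposite.op ((q m).coeff j))
    (fun m i => J i m) j i, (key _).2 rfl, fun I hI => ?_⟩
  funext i j
  exact congrFun (congrFun ((key I).1 hI) j) i
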